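/- arXiv:math/0501097 — 4 statements merged into one kernel-verified Lean document; each statement's English description precedes it below -/
import Mathlib

section
/- Let K be a field of characteristic zero, G a subgroup of Σ₃, and A a G-associative K-algebra, i.e. Σ_{σ∈G} ε(σ) A_μ(x_{σ⁻¹(1)}, x_{σ⁻¹(2)}, x_{σ⁻¹(3)}) = 0 for all x₁,x₂,x₃ ∈ A. Then A is Lie-admissible: the commutator bracket [x,y] = x·y − y·x satisfies the Jacobi identity [[x,y],z] + [[y,z],x] + [[z,x],y] = 0 for all x,y,z ∈ A. -/
/-!
For a triple `x`, let `S x` be the alternating sum of `A_μ(x_{σ⁻¹(1)}, x_{σ⁻¹(2)}, x_{σ⁻¹(3)})`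
over all `σ ∈ Σ₃`. Expanding the associators, the Jacobi identity for the commutator bracket says
`S = 0`. Split `Σ₃` into right cosets `Gτ`: up to the sign `ε(τ)`, the part of `S x` indexed by `Gτ`
is the `G`-associativity relation for the triple `i ↦ x_{τ⁻¹(i)}`, hence vanishes.
-/

open Equiv (Perm)
open Equiv.Perm (sign)

theorem sum_eq_zero_of_forall_sum_rightCoset_eq_zero {Γ M : Type*} [Group Γ] [Fintype Γ]
    [AddCommMonoid M] (H : Subgroup Γ) [Fintype H] (f : Γ → M)
    (hf : ∀ τ, ∑ σ : H, f (σ * τ) = 0) : ∑ τ, f τ = 0 := by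
  obtain ⟨T, hT, -⟩ := H.exists_isComplement_right 1
  have : Fintype T := Fintype.ofFinite T
  calc ∑ τ, f τ = ∑ p : H × T, f (p.1 * p.2) := (hT.sum_comp f).symm
    _ = ∑ t : T, ∑ σ : H, f (σ * t) := Fintype.sum_prod_type_right _
    _ = 0 := Finset.sum_eq_zero fun t _ => hf t

theorem sum_sign_smul_perm_fin_three {M : Type*} [AddCommGroup M]
    (F : Fin 3 → Fin 3 → Fin 3 → M) :
    ∑ σ : Perm (Fin 3), (sign σ : ℤ) • F (σ⁻¹ 0) (σ⁻¹ 1) (σ⁻¹ 2) =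
      F 0 1 2 + F 2 0 1 + F 1 2 0 - (F 1 0 2 + F 2 1 0 + F 0 2 1) := by
  have huniv : (Finset.univ : Finset (Perm (Fin 3))) =
      {1, c[0, 1, 2], c[0, 2, 1], c[0, 1], c[0, 2], c[1, 2]} := by decide
  calc ∑ σ : Perm (Fin 3), (sign σ : ℤ) • F (σ⁻¹ 0) (σ⁻¹ 1) (σ⁻¹ 2)
      = (1 : ℤ) • F 0 1 2 + ((1 : ℤ) • F 2 0 1 + ((1 : ℤ) • F 1 2 0 +
          ((-1 : ℤ) • F 1 0 2 + ((-1 : ℤ) • F 2 1 0 + (-1 : ℤ) • F 0 2 1)))) := by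
        rw [huniv]
        repeat rw [Finset.sum_insert (by decide)]
        rw [Finset.sum_singleton]
        rfl
    _ = F 0 1 2 + F 2 0 1 + F 1 2 0 - (F 1 0 2 + F 2 1 0 + F 0 2 1) := by abel

theorem lie_jacobi_leftNormed {L : Type*} [LieRing L] (x y z : L) :
    ⁅⁅x, y⁆, z⁆ + ⁅⁅y, z⁆, x⁆ + ⁅⁅z, x⁆, y⁆ = 0 := by
  calc ⁅⁅x, y⁆, z⁆ + ⁅⁅y, z⁆, x⁆ + ⁅⁅z, x⁆, y⁆
      = -(⁅x, ⁅y, z⁆⁆ + ⁅y, ⁅z, x⁆⁆ + ⁅z, ⁅x, y⁆⁆) := by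
        rw [← lie_skew ⁅x, y⁆ z, ← lie_skew ⁅y, z⁆ x, ← lie_skew ⁅z, x⁆ y]
        abel
    _ = 0 := by rw [lie_jacobi, neg_zero]

section SignedAssociator

variable {A : Type*} [NonUnitalNonAssocRing A]

/-- The term `ε(σ) A_μ(x_{σ⁻¹(1)}, x_{σ⁻¹(2)}, x_{σ⁻¹(3)})` of the alternating sums defining
`G`-associativity, with indices shifted to `Fin 3`. -/
def signedAssociator (x : Fin 3 → A) (σ : Perm (Fin 3)) : A :=
  (sign σ : ℤ) • associator (x (σ⁻¹ 0)) (x (σ⁻¹ 1)) (x (σ⁻¹ 2))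

theorem signedAssociator_mul (x : Fin 3 → A) (σ τ : Perm (Fin 3)) :
    signedAssociator x (σ * τ) = (sign τ : ℤ) • signedAssociator (x ∘ ⇑τ⁻¹) σ := by
  simp [signedAssociator, smul_smul, mul_comm]

theorem sum_signedAssociator (x y z : A) :
    ∑ σ, signedAssociator ![x, y, z] σ =
      associator x y z + associator z x y + associator y z x -
        (associator y x z + associator z y x + associator x z y) :=
  sum_sign_smul_perm_fin_three fun i j k =>
    associator (![x, y, z] i) (![x, y, z] j) (![x, y, z] k)

end SignedAssociator

/-- `G`-associativity of a nonassociative ring `A`, for a subgroup `G` of the symmetric group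
`Σ₃ = Perm (Fin 3)`: the signed associators of any triple sum to zero over `G`. -/
def IsGAssociative (G : Subgroup (Perm (Fin 3))) [Fintype G] (A : Type*)
    [NonUnitalNonAssocRing A] : Prop :=
  ∀ x : Fin 3 → A, ∑ σ : G, signedAssociator x σ = 0

namespace IsGAssociative

variable {G : Subgroup (Perm (Fin 3))} [Fintype G] {A : Type*} [NonUnitalNonAssocRing A]

theorem sum_perm_eq_zero (h : IsGAssociative G A) (x : Fin 3 → A) :
    ∑ σ, signedAssociator x σ = 0 :=
  sum_eq_zero_of_forall_sum_rightCoset_eq_zero G _ fun τ => by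
    simp only [signedAssociator_mul, ← Finset.smul_sum, h (x ∘ ⇑τ⁻¹), smul_zero]

/-- A `G`-associative ring is Lie-admissible in the sense of Mathlib, whose defining identity is the
vanishing of the alternating sum of associators over all of `Σ₃`. -/
abbrev lieAdmissibleRing (h : IsGAssociative G A) : LieAdmissibleRing A where
  assoc_def x y z := sub_eq_zero.mp <|
    (sum_signedAssociator x y z).symm.trans (h.sum_perm_eq_zero ![x, y, z])

end IsGAssociative

theorem g_associative_lie_admissible_general {G : Subgroup (Perm (Fin 3))} [Fintype G] {A : Type*}
    [NonUnitalNonAssocRing A] (h : IsGAssociative G A) (x y z : A) :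
    ⁅⁅x, y⁆, z⁆ + ⁅⁅y, z⁆, x⁆ + ⁅⁅z, x⁆, y⁆ = 0 :=
  letI := h.lieAdmissibleRing
  lie_jacobi_leftNormed x y z

/-- Every `G`-associative algebra over a field of characteristic zero,
where `G` is a subgroup of `Σ₃`, is Lie-admissible: the commutator bracket satisfies
the Jacobi identity. -/
theorem g_associative_lie_admissible
    (K : Type*) [Field K] [CharZero K]
    (G : Subgroup (Equiv.Perm (Fin 3))) [DecidablePred (· ∈ G)]
    (A : Type*) [NonUnitalNonAssocRing A] [Module K A]
    [SMulCommClass K A A] [IsScalarTower K A A]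
    (h : ∀ x : Fin 3 → A,
      ∑ σ : G,
        (Equiv.Perm.sign (σ : Equiv.Perm (Fin 3)) : ℤ) •
          ((x ((σ : Equiv.Perm (Fin 3))⁻¹ 0) * x ((σ : Equiv.Perm (Fin 3))⁻¹ 1))
              * x ((σ : Equiv.Perm (Fin 3))⁻¹ 2)
            - x ((σ : Equiv.Perm (Fin 3))⁻¹ 0)
              * (x ((σ : Equiv.Perm (Fin 3))⁻¹ 1) * x ((σ : Equiv.Perm (Fin 3))⁻¹ 2))) = 0) :
    ∀ x y z : A,
      ((x * y - y * x) * z - z * (x * y - y * x))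
        + ((y * z - z * y) * x - x * (y * z - z * y))
        + ((z * x - x * z) * y - y * (z * x - x * z)) = 0 :=
  g_associative_lie_admissible_general (G := G) h
end

section
/- Let K be a field of characteristic zero, G a subgroup of Σ₃, and (C,Δ) a G-cogebra, i.e. C a K-vector space and Δ : C → C⊗C a linear map with Σ_{σ∈G} ε(σ) Φ_σ∘(Δ⊗Id)∘Δ = Σ_{σ∈G} ε(σ) Φ_σ∘(Id⊗Δ)∘Δ as linear maps C → C⊗C⊗C. Define a multiplication μ on the dual space C* by μ(f,g) = m_K ∘ (f⊗g) ∘ Δ, where m_K : K⊗K → K is the multiplication of K; equivalently μ(f,g)(x) is the scalar obtained by applying f⊗g to Δ(x) and multiplying the components. Then (C*, μ) is a G-associative algebra: Σ_{σ∈G} ε(σ) A_μ(f_{σ⁻¹(1)}, f_{σ⁻¹(2)}, f_{σ⁻¹(3)}) = 0 for all f₁,f₂,f₃ ∈ C*, where A_μ(f,g,h) = μ(μ(f,g),h) − μ(f,μ(g,h)). -/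
/-!
The iterated convolution products are `(f₀ ⋆ f₁) ⋆ f₂ = F ∘ (Δ ⊗ Id) ∘ Δ` and
`f₀ ⋆ (f₁ ⋆ f₂) = F ∘ (Id ⊗ Δ) ∘ Δ`, where `F (x₀ ⊗ x₁ ⊗ x₂) = f₀ x₀ * f₁ x₁ * f₂ x₂`. As the target
is commutative, composing `F` with `Φ σ` amounts to replacing the family `f` by `f ∘ σ`. Since
inversion permutes `G` and preserves the sign, the alternating sum of the associators of the
families `f ∘ σ⁻¹` is therefore `F` composed with the difference of the two sides of the
`G`-cogebra identity.
-/

open TensorProduct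

/-- The multiplication on the dual space of a cogebra `(C, Δ)`:
`μ(f,g) = m_K ∘ (f ⊗ g) ∘ Δ`, where `m_K` is the multiplication of `K`. -/
noncomputable def dualCogebraMul (K : Type*) [Field K] {C : Type*}
    [AddCommGroup C] [Module K C] (Δ : C →ₗ[K] C ⊗[K] C)
    (f g : Module.Dual K C) : Module.Dual K C :=
  LinearMap.mul' K K ∘ₗ TensorProduct.map f g ∘ₗ Δ

theorem comp_sum_zsmul {R ι M N P : Type*} [Semiring R] [AddCommMonoid M] [Module R M]
    [AddCommGroup N] [Module R N] [AddCommGroup P] [Module R P] (p : N →ₗ[R] P) (s : Finset ι)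
    (n : ι → ℤ) (g : ι → M →ₗ[R] N) :
    p ∘ₗ ∑ i ∈ s, n i • g i = ∑ i ∈ s, n i • (p ∘ₗ g i) := by
  ext x
  simp only [LinearMap.comp_apply, LinearMap.sum_apply, LinearMap.smul_apply, map_sum, map_zsmul]

section Convolution

variable {R A M N P M₁ N₁ : Type*} [CommSemiring R] [AddCommMonoid M] [Module R M]
  [AddCommMonoid N] [Module R N] [AddCommMonoid P] [Module R P] [AddCommMonoid M₁] [Module R M₁]
  [AddCommMonoid N₁] [Module R N₁]

/-- The linear map `x ⊗ y ↦ f x * g y` built from two maps with values in an algebra; for `A = R`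
it is the functional on `M ⊗ N` given by a pair of functionals. -/
noncomputable def mulTensor [Semiring A] [Algebra R A] (f : M →ₗ[R] A) (g : N →ₗ[R] A) :
    M ⊗[R] N →ₗ[R] A :=
  LinearMap.mul' R A ∘ₗ TensorProduct.map f g

/-- The linear map `(x₀ ⊗ x₁) ⊗ x₂ ↦ f₀ x₀ * f₁ x₁ * f₂ x₂`, the three-factor version of
`mulTensor`. The maps form a family over `Fin 3` so that permutations act on it by composition. -/
noncomputable def mulTensorCube [Semiring A] [Algebra R A] (f : Fin 3 → M →ₗ[R] A) :
    (M ⊗[R] M) ⊗[R] M →ₗ[R] A :=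
  mulTensor (mulTensor (f 0) (f 1)) (f 2)

/-- `φ` is the operator `Φ_σ` permuting the factors of the tensor cube by `σ`, that is, it moves
the factor in position `i` to position `σ i`. This determines `φ`, by linearity. -/
def IsTensorCubePerm (σ : Equiv.Perm (Fin 3))
    (φ : (M ⊗[R] M) ⊗[R] M →ₗ[R] (M ⊗[R] M) ⊗[R] M) : Prop :=
  ∀ x : Fin 3 → M,
    φ ((x 0 ⊗ₜ[R] x 1) ⊗ₜ[R] x 2) = (x (σ⁻¹ 0) ⊗ₜ[R] x (σ⁻¹ 1)) ⊗ₜ[R] x (σ⁻¹ 2)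

/-- The convolution product `m_A ∘ (f ⊗ g) ∘ Δ` of linear maps from a cogebra to an algebra.
The convolution product of Mathlib is not used because it requires a counit. -/
noncomputable def cogebraConvolution [Semiring A] [Algebra R A] (Δ : M →ₗ[R] M ⊗[R] M)
    (f g : M →ₗ[R] A) : M →ₗ[R] A :=
  mulTensor f g ∘ₗ Δ

@[simp]
theorem mulTensor_tmul [Semiring A] [Algebra R A] (f : M →ₗ[R] A) (g : N →ₗ[R] A) (x : M) (y : N) :
    mulTensor f g (x ⊗ₜ[R] y) = f x * g y :=
  rfl

theorem mulTensor_comp_map [Semiring A] [Algebra R A] (f : M →ₗ[R] A) (g : N →ₗ[R] A)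
    (p : M₁ →ₗ[R] M) (q : N₁ →ₗ[R] N) :
    mulTensor f g ∘ₗ TensorProduct.map p q = mulTensor (f ∘ₗ p) (g ∘ₗ q) :=
  TensorProduct.ext' fun _ _ => rfl

theorem mulTensor_mulTensor_comp_assoc_symm [Semiring A] [Algebra R A] (f : M →ₗ[R] A)
    (g : N →ₗ[R] A) (h : P →ₗ[R] A) :
    mulTensor (mulTensor f g) h ∘ₗ (TensorProduct.assoc R M N P).symm.toLinearMap =
      mulTensor f (mulTensor g h) := by
  ext x y z
  simp [mul_assoc]

theorem cogebraConvolution_cogebraConvolution_left [Semiring A] [Algebra R A]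
    (Δ : M →ₗ[R] M ⊗[R] M) (f : Fin 3 → M →ₗ[R] A) :
    cogebraConvolution Δ (cogebraConvolution Δ (f 0) (f 1)) (f 2) =
      mulTensorCube f ∘ₗ TensorProduct.map Δ LinearMap.id ∘ₗ Δ := by
  rw [mulTensorCube, ← LinearMap.comp_assoc, mulTensor_comp_map, LinearMap.comp_id]
  rfl

theorem cogebraConvolution_cogebraConvolution_right [Semiring A] [Algebra R A]
    (Δ : M →ₗ[R] M ⊗[R] M) (f : Fin 3 → M →ₗ[R] A) :
    cogebraConvolution Δ (f 0) (cogebraConvolution Δ (f 1) (f 2)) =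
      mulTensorCube f ∘ₗ (TensorProduct.assoc R M M M).symm.toLinearMap ∘ₗ
        TensorProduct.map LinearMap.id Δ ∘ₗ Δ := by
  rw [mulTensorCube, ← LinearMap.comp_assoc, mulTensor_mulTensor_comp_assoc_symm,
    ← LinearMap.comp_assoc, mulTensor_comp_map, LinearMap.comp_id]
  rfl

theorem mulTensorCube_tmul [CommSemiring A] [Algebra R A] (f : Fin 3 → M →ₗ[R] A)
    (x : Fin 3 → M) :
    mulTensorCube f ((x 0 ⊗ₜ[R] x 1) ⊗ₜ[R] x 2) = ∏ i, f i (x i) := by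
  simp only [mulTensorCube, mulTensor_tmul, Fin.prod_univ_three]

theorem mulTensorCube_comp_perm [CommSemiring A] [Algebra R A] {σ : Equiv.Perm (Fin 3)}
    {φ : (M ⊗[R] M) ⊗[R] M →ₗ[R] (M ⊗[R] M) ⊗[R] M}
    (hφ : IsTensorCubePerm σ φ) (f : Fin 3 → M →ₗ[R] A) :
    mulTensorCube f ∘ₗ φ = mulTensorCube (f ∘ σ) := by
  suffices h : ∀ x : Fin 3 → M, mulTensorCube f (φ ((x 0 ⊗ₜ[R] x 1) ⊗ₜ[R] x 2)) =
      mulTensorCube (f ∘ σ) ((x 0 ⊗ₜ[R] x 1) ⊗ₜ[R] x 2) from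
    TensorProduct.ext_threefold fun x y z => h ![x, y, z]
  intro x
  calc mulTensorCube f (φ ((x 0 ⊗ₜ[R] x 1) ⊗ₜ[R] x 2))
      = ∏ i, f i (x (σ⁻¹ i)) := by rw [hφ x]; exact mulTensorCube_tmul f (x ∘ ⇑σ⁻¹)
    _ = ∏ i, f (σ i) (x i) := by
      simpa only [Equiv.Perm.inv_def, Equiv.symm_apply_apply] using
        (Equiv.prod_comp σ fun i => f i (x (σ⁻¹ i))).symm
    _ = mulTensorCube (f ∘ σ) ((x 0 ⊗ₜ[R] x 1) ⊗ₜ[R] x 2) :=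
      (mulTensorCube_tmul (f ∘ σ) x).symm

/-- The associator `(f₀ ⋆ f₁) ⋆ f₂ - f₀ ⋆ (f₁ ⋆ f₂)` of the convolution product of a
cogebra, as a function of the family `f`. -/
noncomputable def convolutionAssociator [Ring A] [Algebra R A] (Δ : M →ₗ[R] M ⊗[R] M)
    (f : Fin 3 → M →ₗ[R] A) : M →ₗ[R] A :=
  cogebraConvolution Δ (cogebraConvolution Δ (f 0) (f 1)) (f 2) -
    cogebraConvolution Δ (f 0) (cogebraConvolution Δ (f 1) (f 2))

theorem convolutionAssociator_comp_perm [CommRing A] [Algebra R A] (Δ : M →ₗ[R] M ⊗[R] M)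
    {σ : Equiv.Perm (Fin 3)} {φ : (M ⊗[R] M) ⊗[R] M →ₗ[R] (M ⊗[R] M) ⊗[R] M}
    (hφ : IsTensorCubePerm σ φ) (f : Fin 3 → M →ₗ[R] A) :
    convolutionAssociator Δ (f ∘ σ) =
      mulTensorCube f ∘ₗ (φ ∘ₗ TensorProduct.map Δ LinearMap.id ∘ₗ Δ) -
        mulTensorCube f ∘ₗ (φ ∘ₗ (TensorProduct.assoc R M M M).symm.toLinearMap ∘ₗ
          TensorProduct.map LinearMap.id Δ ∘ₗ Δ) := by
  rw [convolutionAssociator, cogebraConvolution_cogebraConvolution_left,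
    cogebraConvolution_cogebraConvolution_right, ← mulTensorCube_comp_perm hφ,
    LinearMap.comp_assoc, LinearMap.comp_assoc]

end Convolution

theorem dual_of_g_cogebra_is_g_associative_general
    {R A C : Type*} [CommSemiring R] [CommRing A] [Algebra R A] [AddCommGroup C] [Module R C]
    (G : Subgroup (Equiv.Perm (Fin 3))) [DecidablePred (· ∈ G)]
    (Δ : C →ₗ[R] C ⊗[R] C)
    (Φ : Equiv.Perm (Fin 3) → ((C ⊗[R] C) ⊗[R] C →ₗ[R] (C ⊗[R] C) ⊗[R] C))
    (hΦ : ∀ σ, IsTensorCubePerm σ (Φ σ))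
    (hG : ∑ σ : G,
        (Equiv.Perm.sign (σ : Equiv.Perm (Fin 3)) : ℤ) •
          (Φ σ ∘ₗ TensorProduct.map Δ LinearMap.id ∘ₗ Δ)
      = ∑ σ : G,
        (Equiv.Perm.sign (σ : Equiv.Perm (Fin 3)) : ℤ) •
          (Φ σ ∘ₗ (TensorProduct.assoc R C C C).symm.toLinearMap
            ∘ₗ TensorProduct.map LinearMap.id Δ ∘ₗ Δ))
    (f : Fin 3 → C →ₗ[R] A) :
    ∑ σ : G, (Equiv.Perm.sign (σ : Equiv.Perm (Fin 3)) : ℤ) •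
      convolutionAssociator Δ (f ∘ ⇑(σ : Equiv.Perm (Fin 3))⁻¹) = 0 := by
  calc ∑ σ : G, (Equiv.Perm.sign (σ : Equiv.Perm (Fin 3)) : ℤ) •
        convolutionAssociator Δ (f ∘ ⇑(σ : Equiv.Perm (Fin 3))⁻¹)
      = ∑ σ : G, (Equiv.Perm.sign (σ : Equiv.Perm (Fin 3)) : ℤ) •
          convolutionAssociator Δ (f ∘ (σ : Equiv.Perm (Fin 3))) := by
        rw [← Equiv.sum_comp (Equiv.inv G)]
        simp only [Equiv.inv_apply, InvMemClass.coe_inv, inv_inv, Equiv.Perm.sign_inv]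
    _ = mulTensorCube f ∘ₗ (∑ σ : G, (Equiv.Perm.sign (σ : Equiv.Perm (Fin 3)) : ℤ) •
            (Φ σ ∘ₗ TensorProduct.map Δ LinearMap.id ∘ₗ Δ)) -
          mulTensorCube f ∘ₗ (∑ σ : G, (Equiv.Perm.sign (σ : Equiv.Perm (Fin 3)) : ℤ) •
            (Φ σ ∘ₗ (TensorProduct.assoc R C C C).symm.toLinearMap ∘ₗ
              TensorProduct.map LinearMap.id Δ ∘ₗ Δ)) := by
        simp only [convolutionAssociator_comp_perm Δ (hΦ _), smul_sub, Finset.sum_sub_distrib,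
          comp_sum_zsmul]
    _ = 0 := sub_eq_zero.mpr (congrArg (mulTensorCube f ∘ₗ ·) hG)

/-- The dual space of a `G`-cogebra `(C, Δ)` is a `G`-associative algebra
for the multiplication `μ(f,g) = m_K ∘ (f ⊗ g) ∘ Δ`. Here `Φ σ` denotes the permutation
operator on `(C ⊗ C) ⊗ C` with `Φ σ (x₁⊗x₂⊗x₃) = x_{σ⁻¹(1)} ⊗ x_{σ⁻¹(2)} ⊗ x_{σ⁻¹(3)}`,
and the `G`-cogebra condition reads
`∑_{σ∈G} ε(σ) Φ_σ∘(Δ⊗Id)∘Δ = ∑_{σ∈G} ε(σ) Φ_σ∘(Id⊗Δ)∘Δ`. -/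
theorem dual_of_g_cogebra_is_g_associative
    (K : Type*) [Field K] [CharZero K]
    (C : Type*) [AddCommGroup C] [Module K C]
    (G : Subgroup (Equiv.Perm (Fin 3))) [DecidablePred (· ∈ G)]
    (Δ : C →ₗ[K] C ⊗[K] C)
    (Φ : Equiv.Perm (Fin 3) → ((C ⊗[K] C) ⊗[K] C →ₗ[K] (C ⊗[K] C) ⊗[K] C))
    (hΦ : ∀ (σ : Equiv.Perm (Fin 3)) (x : Fin 3 → C),
      Φ σ ((x 0 ⊗ₜ[K] x 1) ⊗ₜ[K] x 2) = (x (σ⁻¹ 0) ⊗ₜ[K] x (σ⁻¹ 1)) ⊗ₜ[K] x (σ⁻¹ 2))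
    (hG : ∑ σ : G,
        (Equiv.Perm.sign (σ : Equiv.Perm (Fin 3)) : ℤ) •
          (Φ σ ∘ₗ TensorProduct.map Δ LinearMap.id ∘ₗ Δ)
      = ∑ σ : G,
        (Equiv.Perm.sign (σ : Equiv.Perm (Fin 3)) : ℤ) •
          (Φ σ ∘ₗ (TensorProduct.assoc K C C C).symm.toLinearMap
            ∘ₗ TensorProduct.map LinearMap.id Δ ∘ₗ Δ)) :
    ∀ f : Fin 3 → Module.Dual K C,
      ∑ σ : G,
        (Equiv.Perm.sign (σ : Equiv.Perm (Fin 3)) : ℤ) •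
          (dualCogebraMul K Δ
              (dualCogebraMul K Δ (f ((σ : Equiv.Perm (Fin 3))⁻¹ 0))
                (f ((σ : Equiv.Perm (Fin 3))⁻¹ 1)))
              (f ((σ : Equiv.Perm (Fin 3))⁻¹ 2))
            - dualCogebraMul K Δ (f ((σ : Equiv.Perm (Fin 3))⁻¹ 0))
              (dualCogebraMul K Δ (f ((σ : Equiv.Perm (Fin 3))⁻¹ 1))
                (f ((σ : Equiv.Perm (Fin 3))⁻¹ 2)))) = 0 :=
  dual_of_g_cogebra_is_g_associative_general G Δ Φ hΦ hG
end

section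
/- Let K be a field of characteristic zero, G a subgroup of Σ₃, and (C,Δ) a G-cogebra. Let τ : C⊗C → C⊗C be the flip x⊗y ↦ y⊗x and set Δ_L = Δ − τ∘Δ. Then (C,Δ_L) is a Lie cogebra: (1) τ∘Δ_L = −Δ_L, and (2) Φ_v ∘ (Id⊗Δ_L) ∘ Δ_L = 0 as a linear map C → C⊗C⊗C, where Φ_v = Φ_id + Φ_{c₁} + Φ_{c₂} is the sum of the permutation maps associated with the three cyclic permutations of Σ₃. -/
open TensorProduct

/-! In the group algebra of `Σ₃`, the alternator `𝒜 = ∑ ε(σ) σ` factors as `v (1 - s)`, where `v`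
is the sum of the powers of the 3-cycle `c` and `s = (2 3)`. Moving the flips in
`(Id ⊗ Δ_L) ∘ Δ_L` to the left of the iterated coproducts turns it into
`(1 - s) ∘ ((Id ⊗ Δ) ∘ Δ - c ∘ (Δ ⊗ Id) ∘ Δ)`. Since `𝒜 c = 𝒜`, applying `v` gives the composite
of `𝒜` with the coassociator of `Δ`. Finally, summing over representatives of the left cosets of
`G` exhibits `𝒜` as a left multiple of `∑_{σ ∈ G} ε(σ) σ`, so it kills the coassociator of a
`G`-cogebra. -/

section Norm

variable {k G V W : Type*} [Semiring k] [Group G] [Fintype G] [AddCommMonoid V] [Module k V]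
  [AddCommMonoid W] [Module k W] (ρ : Representation k G V)

theorem norm_eq_sum_comp_norm_of_isComplement {S : Set G} {H : Subgroup G} [Fintype S] [Fintype H]
    (hS : Subgroup.IsComplement S H) :
    ρ.norm = (∑ s : S, ρ s) ∘ₗ Representation.norm (ρ.comp H.subtype) := by
  calc ρ.norm = ∑ p : S × H, ρ (p.1 * p.2) := (hS.sum_comp ρ).symm
    _ = ∑ s : S, ∑ h : H, ρ s ∘ₗ ρ h := by
      simp only [map_mul, Module.End.mul_eq_comp, Fintype.sum_prod_type]
    _ = (∑ s : S, ρ s) ∘ₗ Representation.norm (ρ.comp H.subtype) := by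
      ext x
      simp [Representation.norm]

theorem norm_comp_eq_zero_of_subgroup {H : Subgroup G} [Fintype H] {f : W →ₗ[k] V}
    (hf : Representation.norm (ρ.comp H.subtype) ∘ₗ f = 0) : ρ.norm ∘ₗ f = 0 := by
  classical
  obtain ⟨S, hS, -⟩ := H.exists_isComplement_left 1
  rw [norm_eq_sum_comp_norm_of_isComplement ρ hS, LinearMap.comp_assoc, hf, LinearMap.comp_zero]

theorem norm_perm_fin_three (ρ : Representation k (Equiv.Perm (Fin 3)) V) :
    ρ.norm =
      (ρ 1 + ρ (finRotate 3) + ρ (finRotate 3 ^ 2)) ∘ₗ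
        (LinearMap.id + ρ (Equiv.swap 1 2)) := by
  have univ_eq : (Finset.univ : Finset (Equiv.Perm (Fin 3))) =
      {1, finRotate 3, finRotate 3 ^ 2, Equiv.swap 1 2, finRotate 3 * Equiv.swap 1 2,
        finRotate 3 ^ 2 * Equiv.swap 1 2} := by decide
  rw [Representation.norm, univ_eq]
  repeat rw [Finset.sum_insert (by decide)]
  rw [Finset.sum_singleton, ← Module.End.mul_eq_comp, ← Module.End.one_eq_id]
  simp only [map_mul, map_one, mul_add, add_mul, one_mul, mul_one]
  abel

end Norm

section SignTwist

variable {R V α : Type*} [Semiring R] [AddCommGroup V] [Module R V] [Fintype α] [DecidableEq α]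

/-- The tensor product of a representation of a symmetric group with the sign character. Its norm
is the alternator `∑ σ, ε(σ) ρ(σ)`. -/
def signTwist (ρ : Representation R (Equiv.Perm α) V) : Representation R (Equiv.Perm α) V where
  toFun σ := (Equiv.Perm.sign σ : ℤ) • ρ σ
  map_one' := by simp
  map_mul' σ τ := by
    rw [map_mul, map_mul, Units.val_mul, smul_mul_smul_comm]

theorem signTwist_apply (ρ : Representation R (Equiv.Perm α) V) (σ : Equiv.Perm α) :
    signTwist ρ σ = (Equiv.Perm.sign σ : ℤ) • ρ σ :=
  rfl

theorem signTwist_eq_of_sign_eq_one (ρ : Representation R (Equiv.Perm α) V) {σ : Equiv.Perm α}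
    (hσ : Equiv.Perm.sign σ = 1) : signTwist ρ σ = ρ σ := by
  simp [signTwist_apply, hσ]

theorem norm_signTwist_comp_of_sign_eq_one (ρ : Representation R (Equiv.Perm α) V)
    {σ : Equiv.Perm α} (hσ : Equiv.Perm.sign σ = 1) :
    (signTwist ρ).norm ∘ₗ ρ σ = (signTwist ρ).norm := by
  rw [← signTwist_eq_of_sign_eq_one ρ hσ, Representation.norm_comp_self]

theorem norm_signTwist_subgroup_comp {W : Type*} [AddCommMonoid W] [Module R W]
    (ρ : Representation R (Equiv.Perm α) V) (G : Subgroup (Equiv.Perm α)) [Fintype G]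
    (f : W →ₗ[R] V) :
    Representation.norm ((signTwist ρ).comp G.subtype) ∘ₗ f =
      ∑ σ : G, (Equiv.Perm.sign (σ : Equiv.Perm α) : ℤ) • (ρ σ ∘ₗ f) := by
  ext x
  simp [Representation.norm, signTwist_apply]

theorem norm_signTwist_perm_fin_three (ρ : Representation R (Equiv.Perm (Fin 3)) V) :
    (signTwist ρ).norm =
      (ρ 1 + ρ (finRotate 3) + ρ (finRotate 3 ^ 2)) ∘ₗ
        (LinearMap.id - ρ (Equiv.swap 1 2)) := by
  have twist_swap : signTwist ρ (Equiv.swap 1 2) = -ρ (Equiv.swap 1 2) := by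
    simp [signTwist_apply]
  rw [norm_perm_fin_three, twist_swap, ← sub_eq_add_neg, signTwist_eq_of_sign_eq_one ρ (σ := 1),
    signTwist_eq_of_sign_eq_one ρ (σ := finRotate 3),
    signTwist_eq_of_sign_eq_one ρ (σ := finRotate 3 ^ 2)] <;> decide

end SignTwist

section TensorCube

variable {R C : Type*} [CommSemiring R] [AddCommMonoid C] [Module R C]

/-- `Φ` is the family of operators `Φ_σ` permuting the three factors of `C ⊗ C ⊗ C`, encoded as
`(C ⊗ C) ⊗ C`; factors are numbered from `0`. -/
def PermutesTensorFactors
    (Φ : Equiv.Perm (Fin 3) → ((C ⊗[R] C) ⊗[R] C →ₗ[R] (C ⊗[R] C) ⊗[R] C)) : Prop :=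
  ∀ (σ : Equiv.Perm (Fin 3)) (x : Fin 3 → C),
    Φ σ ((x 0 ⊗ₜ[R] x 1) ⊗ₜ[R] x 2) = (x (σ⁻¹ 0) ⊗ₜ[R] x (σ⁻¹ 1)) ⊗ₜ[R] x (σ⁻¹ 2)

namespace PermutesTensorFactors

variable {Φ : Equiv.Perm (Fin 3) → ((C ⊗[R] C) ⊗[R] C →ₗ[R] (C ⊗[R] C) ⊗[R] C)}

theorem apply_tmul (hΦ : PermutesTensorFactors Φ) (σ : Equiv.Perm (Fin 3)) (a b c : C) :
    Φ σ ((a ⊗ₜ[R] b) ⊗ₜ[R] c) =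
      (![a, b, c] (σ⁻¹ 0) ⊗ₜ[R] ![a, b, c] (σ⁻¹ 1)) ⊗ₜ[R] ![a, b, c] (σ⁻¹ 2) :=
  hΦ σ ![a, b, c]

/-- The operators `Φ_σ` as a representation of `Σ₃`, left because `Φ_σ` moves the factor in
position `i` to position `σ i`. -/
def toRepresentation (hΦ : PermutesTensorFactors Φ) :
    Representation R (Equiv.Perm (Fin 3)) ((C ⊗[R] C) ⊗[R] C) where
  toFun := Φ
  map_one' := TensorProduct.ext_threefold fun a b c ↦ hΦ.apply_tmul 1 a b c
  map_mul' σ τ := TensorProduct.ext_threefold fun a b c ↦ by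
    rw [Module.End.mul_apply, hΦ.apply_tmul, hΦ.apply_tmul, hΦ σ fun i ↦ ![a, b, c] (τ⁻¹ i)]
    simp only [mul_inv_rev, Equiv.Perm.mul_apply]

theorem finRotate_eq (hΦ : PermutesTensorFactors Φ) :
    Φ (finRotate 3) =
      (TensorProduct.assoc R C C C).symm.toLinearMap ∘ₗ
        (TensorProduct.comm R (C ⊗[R] C) C).toLinearMap :=
  TensorProduct.ext_threefold fun a b c ↦ hΦ.apply_tmul (finRotate 3) a b c

theorem swap_one_two_comp_assoc_symm (hΦ : PermutesTensorFactors Φ) :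
    Φ (Equiv.swap 1 2) ∘ₗ (TensorProduct.assoc R C C C).symm.toLinearMap =
      (TensorProduct.assoc R C C C).symm.toLinearMap ∘ₗ
        (TensorProduct.comm R C C).toLinearMap.lTensor C :=
  TensorProduct.ext_threefold' fun a b c ↦ hΦ.apply_tmul (Equiv.swap 1 2) a b c

end PermutesTensorFactors

end TensorCube

section Cogebra

variable {R C : Type*} [CommSemiring R] [AddCommGroup C] [Module R C]

/-- The difference `(Id ⊗ Δ) ∘ Δ - (Δ ⊗ Id) ∘ Δ`, whose vanishing is coassociativity, with values
in `(C ⊗ C) ⊗ C`. -/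
def coassociator (Δ : C →ₗ[R] C ⊗[R] C) : C →ₗ[R] (C ⊗[R] C) ⊗[R] C :=
  (TensorProduct.assoc R C C C).symm.toLinearMap ∘ₗ Δ.lTensor C ∘ₗ Δ - Δ.rTensor C ∘ₗ Δ

/-- The map `Δ_L = Δ - τ ∘ Δ`, dual to the commutator of a product. -/
def cocommutator (Δ : C →ₗ[R] C ⊗[R] C) : C →ₗ[R] C ⊗[R] C :=
  Δ - (TensorProduct.comm R C C).toLinearMap ∘ₗ Δ

theorem comm_comp_cocommutator (Δ : C →ₗ[R] C ⊗[R] C) :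
    (TensorProduct.comm R C C).toLinearMap ∘ₗ cocommutator Δ = -cocommutator Δ := by
  ext x
  simp [cocommutator]

namespace PermutesTensorFactors

variable {Φ : Equiv.Perm (Fin 3) → ((C ⊗[R] C) ⊗[R] C →ₗ[R] (C ⊗[R] C) ⊗[R] C)}

theorem assoc_symm_comp_lTensor_cocommutator (hΦ : PermutesTensorFactors Φ)
    (Δ : C →ₗ[R] C ⊗[R] C) :
    (TensorProduct.assoc R C C C).symm.toLinearMap ∘ₗ (cocommutator Δ).lTensor C =
      (LinearMap.id - Φ (Equiv.swap 1 2)) ∘ₗ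
        (TensorProduct.assoc R C C C).symm.toLinearMap ∘ₗ Δ.lTensor C := by
  rw [cocommutator, LinearMap.lTensor_sub, LinearMap.lTensor_comp, LinearMap.comp_sub,
    LinearMap.sub_comp, LinearMap.id_comp, ← LinearMap.comp_assoc, ← LinearMap.comp_assoc,
    hΦ.swap_one_two_comp_assoc_symm]

theorem assoc_symm_comp_lTensor_comp_cocommutator (hΦ : PermutesTensorFactors Φ)
    (Δ : C →ₗ[R] C ⊗[R] C) :
    (TensorProduct.assoc R C C C).symm.toLinearMap ∘ₗ Δ.lTensor C ∘ₗ cocommutator Δ =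
      (TensorProduct.assoc R C C C).symm.toLinearMap ∘ₗ Δ.lTensor C ∘ₗ Δ -
        Φ (finRotate 3) ∘ₗ Δ.rTensor C ∘ₗ Δ := by
  have lTensor_flip : Δ.lTensor C ∘ₗ (TensorProduct.comm R C C).toLinearMap ∘ₗ Δ =
      (TensorProduct.comm R (C ⊗[R] C) C).toLinearMap ∘ₗ Δ.rTensor C ∘ₗ Δ :=
    congrArg (· ∘ₗ Δ) Δ.lTensor_comp_comm
  rw [cocommutator, LinearMap.comp_sub, LinearMap.comp_sub, lTensor_flip, hΦ.finRotate_eq,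
    LinearMap.comp_assoc]

theorem sum_rotations_comp_lTensor_cocommutator_comp_cocommutator
    (hΦ : PermutesTensorFactors Φ) (Δ : C →ₗ[R] C ⊗[R] C) :
    (Φ 1 + Φ (finRotate 3) + Φ (finRotate 3 ^ 2)) ∘ₗ
        (TensorProduct.assoc R C C C).symm.toLinearMap ∘ₗ
          (cocommutator Δ).lTensor C ∘ₗ cocommutator Δ =
      (signTwist hΦ.toRepresentation).norm ∘ₗ coassociator Δ := by
  set v := Φ 1 + Φ (finRotate 3) + Φ (finRotate 3 ^ 2)
  set A := Δ.rTensor C ∘ₗ Δ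
  set B := (TensorProduct.assoc R C C C).symm.toLinearMap ∘ₗ Δ.lTensor C ∘ₗ Δ
  set alternator := (signTwist hΦ.toRepresentation).norm
  have alternator_eq : alternator = v ∘ₗ (LinearMap.id - Φ (Equiv.swap 1 2)) :=
    norm_signTwist_perm_fin_three hΦ.toRepresentation
  have alternator_rotate : alternator ∘ₗ Φ (finRotate 3) = alternator :=
    norm_signTwist_comp_of_sign_eq_one hΦ.toRepresentation (by decide)
  calc
    _ = v ∘ₗ ((TensorProduct.assoc R C C C).symm.toLinearMap ∘ₗ (cocommutator Δ).lTensor C) ∘ₗ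
          cocommutator Δ := rfl
    _ = alternator ∘ₗ (TensorProduct.assoc R C C C).symm.toLinearMap ∘ₗ Δ.lTensor C ∘ₗ
          cocommutator Δ := by
      rw [hΦ.assoc_symm_comp_lTensor_cocommutator, alternator_eq]
      rfl
    _ = alternator ∘ₗ (B - Φ (finRotate 3) ∘ₗ A) := by
      rw [hΦ.assoc_symm_comp_lTensor_comp_cocommutator]
    _ = alternator ∘ₗ B - alternator ∘ₗ A := by
      rw [LinearMap.comp_sub, ← LinearMap.comp_assoc A, alternator_rotate]
    _ = alternator ∘ₗ coassociator Δ := by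
      rw [coassociator, LinearMap.comp_sub]

end PermutesTensorFactors

end Cogebra

theorem g_cogebra_gives_lie_cogebra_general
    (R : Type*) [CommSemiring R]
    (C : Type*) [AddCommGroup C] [Module R C]
    (G : Subgroup (Equiv.Perm (Fin 3))) [Fintype G]
    (Δ : C →ₗ[R] C ⊗[R] C)
    (Φ : Equiv.Perm (Fin 3) → ((C ⊗[R] C) ⊗[R] C →ₗ[R] (C ⊗[R] C) ⊗[R] C))
    (hΦ : PermutesTensorFactors Φ)
    (hG : ∑ σ : G,
        (Equiv.Perm.sign (σ : Equiv.Perm (Fin 3)) : ℤ) •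
          (Φ σ ∘ₗ TensorProduct.map Δ LinearMap.id ∘ₗ Δ)
      = ∑ σ : G,
        (Equiv.Perm.sign (σ : Equiv.Perm (Fin 3)) : ℤ) •
          (Φ σ ∘ₗ (TensorProduct.assoc R C C C).symm.toLinearMap
            ∘ₗ TensorProduct.map LinearMap.id Δ ∘ₗ Δ)) :
    (TensorProduct.comm R C C).toLinearMap ∘ₗ cocommutator Δ = -cocommutator Δ ∧
    (Φ 1 + Φ (finRotate 3) + Φ ((finRotate 3) ^ 2))
        ∘ₗ (TensorProduct.assoc R C C C).symm.toLinearMap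
        ∘ₗ TensorProduct.map LinearMap.id (cocommutator Δ) ∘ₗ cocommutator Δ = 0 := by
  have subgroup_norm_coassociator : Representation.norm
      ((signTwist hΦ.toRepresentation).comp G.subtype) ∘ₗ coassociator Δ = 0 := by
    rw [coassociator, LinearMap.comp_sub, norm_signTwist_subgroup_comp,
      norm_signTwist_subgroup_comp]
    exact sub_eq_zero.mpr hG.symm
  have norm_coassociator : (signTwist hΦ.toRepresentation).norm ∘ₗ coassociator Δ = 0 :=
    norm_comp_eq_zero_of_subgroup _ subgroup_norm_coassociator
  exact ⟨comm_comp_cocommutator Δ,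
    (hΦ.sum_rotations_comp_lTensor_cocommutator_comp_cocommutator Δ).trans norm_coassociator⟩

/-- If `(C, Δ)` is a `G`-cogebra and `Δ_L = Δ − τ∘Δ` (with `τ` the flip
of `C ⊗ C`), then `(C, Δ_L)` is a Lie cogebra: `τ∘Δ_L = −Δ_L` and
`(Φ_id + Φ_{c₁} + Φ_{c₂}) ∘ (Id ⊗ Δ_L) ∘ Δ_L = 0`, where `c₁, c₂` are the two `3`-cycles
of `Σ₃` and `Φ σ` is the permutation operator on `(C ⊗ C) ⊗ C` with
`Φ σ (x₁⊗x₂⊗x₃) = x_{σ⁻¹(1)} ⊗ x_{σ⁻¹(2)} ⊗ x_{σ⁻¹(3)}`. -/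
theorem g_cogebra_gives_lie_cogebra
    (K : Type*) [Field K] [CharZero K]
    (C : Type*) [AddCommGroup C] [Module K C]
    (G : Subgroup (Equiv.Perm (Fin 3))) [DecidablePred (· ∈ G)]
    (Δ : C →ₗ[K] C ⊗[K] C)
    (Φ : Equiv.Perm (Fin 3) → ((C ⊗[K] C) ⊗[K] C →ₗ[K] (C ⊗[K] C) ⊗[K] C))
    (hΦ : ∀ (σ : Equiv.Perm (Fin 3)) (x : Fin 3 → C),
      Φ σ ((x 0 ⊗ₜ[K] x 1) ⊗ₜ[K] x 2) = (x (σ⁻¹ 0) ⊗ₜ[K] x (σ⁻¹ 1)) ⊗ₜ[K] x (σ⁻¹ 2))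
    (hG : ∑ σ : G,
        (Equiv.Perm.sign (σ : Equiv.Perm (Fin 3)) : ℤ) •
          (Φ σ ∘ₗ TensorProduct.map Δ LinearMap.id ∘ₗ Δ)
      = ∑ σ : G,
        (Equiv.Perm.sign (σ : Equiv.Perm (Fin 3)) : ℤ) •
          (Φ σ ∘ₗ (TensorProduct.assoc K C C C).symm.toLinearMap
            ∘ₗ TensorProduct.map LinearMap.id Δ ∘ₗ Δ))
    (ΔL : C →ₗ[K] C ⊗[K] C)
    (hΔL : ΔL = Δ - (TensorProduct.comm K C C).toLinearMap ∘ₗ Δ) :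
    (TensorProduct.comm K C C).toLinearMap ∘ₗ ΔL = -ΔL ∧
    (Φ 1 + Φ (finRotate 3) + Φ ((finRotate 3) ^ 2))
        ∘ₗ (TensorProduct.assoc K C C C).symm.toLinearMap
        ∘ₗ TensorProduct.map LinearMap.id ΔL ∘ₗ ΔL = 0 := by
  subst hΔL
  exact g_cogebra_gives_lie_cogebra_general K C G Δ Φ hΦ hG
end

section
/- Let K be a field of characteristic zero and G a subgroup of Σ₃. Let A be a G-associative K-algebra and let B be a G^!-algebra, i.e. an associative K-algebra whose triple products are G-invariant: y₁·y₂·y₃ = y_{σ(1)}·y_{σ(2)}·y_{σ(3)} for all y₁,y₂,y₃ ∈ B and all σ ∈ G. Then the tensor product A⊗B, with multiplication (a₁⊗b₁)·(a₂⊗b₂) = (a₁·a₂)⊗(b₁·b₂), is a G-associative algebra: Σ_{σ∈G} ε(σ) A_μ(u_{σ⁻¹(1)}, u_{σ⁻¹(2)}, u_{σ⁻¹(3)}) = 0 for all u₁,u₂,u₃ ∈ A⊗B. -/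
open TensorProduct

/-! The associator of `A ⊗ B` is multilinear, so it is determined by its values on pure tensors,
and there associativity of `B` makes it the associator of `A` tensored with the triple product
of `B`. Invariance of the triple products turns the latter into a common factor of all
summands, leaving the identity that holds in `A`. -/

section MultilinearAssociator

variable (K A : Type*) [CommSemiring K] [NonUnitalNonAssocRing A] [Module K A]
  [SMulCommClass K A A] [IsScalarTower K A A]

/-- The associator of a nonassociative `K`-algebra as a `K`-multilinear map on triples, so that
permutations act on its arguments through `MultilinearMap.domDomCongr`. -/
def multilinearAssociator : MultilinearMap K (fun _ : Fin 3 => A) A :=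
  MultilinearMap.mk' (fun x => associator (x 0) (x 1) (x 2))
    (fun x i a b => by
      -- `map_add` applies to the bundled associator only
      simp only [← AddMonoidHom.associator_apply]
      fin_cases i <;> simp [Function.update, -AddMonoidHom.associator_apply])
    (fun x i c a => by
      fin_cases i <;>
        simp [Function.update, associator_apply, smul_sub, smul_mul_assoc, mul_smul_comm])

variable {K A} in
theorem multilinearAssociator_apply (x : Fin 3 → A) :
    multilinearAssociator K A x = associator (x 0) (x 1) (x 2) :=
  rfl

variable {K} {ι : Type*} [Fintype ι]

/-- The linear combination with coefficients `c i` of the associators with arguments permuted by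
`τ i`. With `ι = G`, `c σ = sign σ` and `τ σ = σ⁻¹`, its vanishing is `G`-associativity. -/
def permutedAssociatorSum (c : ι → K) (τ : ι → Equiv.Perm (Fin 3)) :
    MultilinearMap K (fun _ : Fin 3 => A) A :=
  ∑ i, c i • (multilinearAssociator K A).domDomCongr (τ i)

variable {A} in
theorem permutedAssociatorSum_apply (c : ι → K) (τ : ι → Equiv.Perm (Fin 3)) (x : Fin 3 → A) :
    permutedAssociatorSum A c τ x =
      ∑ i, c i • associator (x (τ i 0)) (x (τ i 1)) (x (τ i 2)) := by
  simp only [permutedAssociatorSum, sum_apply, smul_apply,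
    MultilinearMap.domDomCongr_apply, multilinearAssociator_apply]

end MultilinearAssociator

section PureTensors

theorem span_range_tmul_eq_top (K M N : Type*) [CommSemiring K] [AddCommMonoid M] [Module K M]
    [AddCommMonoid N] [Module K N] :
    Submodule.span K (Set.range fun p : M × N => p.1 ⊗ₜ[K] p.2) = ⊤ := by
  rw [← TensorProduct.span_tmul_eq_top]
  congr 1
  ext t
  simp

variable {K A B : Type*} [CommSemiring K]
  [NonUnitalNonAssocRing A] [Module K A] [SMulCommClass K A A] [IsScalarTower K A A]
  [NonUnitalSemiring B] [Module K B] [SMulCommClass K B B] [IsScalarTower K B B]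

theorem associator_tmul (a₁ a₂ a₃ : A) (b₁ b₂ b₃ : B) :
    associator (a₁ ⊗ₜ[K] b₁) (a₂ ⊗ₜ[K] b₂) (a₃ ⊗ₜ[K] b₃) =
      associator a₁ a₂ a₃ ⊗ₜ[K] (b₁ * b₂ * b₃) := by
  simp only [associator_apply, Algebra.TensorProduct.tmul_mul_tmul, TensorProduct.sub_tmul,
    mul_assoc]

variable {ι : Type*} [Fintype ι] (c : ι → K) (τ : ι → Equiv.Perm (Fin 3))

theorem permutedAssociatorSum_tmul
    (hB : ∀ (i : ι) (y : Fin 3 → B), y 0 * y 1 * y 2 = y (τ i 0) * y (τ i 1) * y (τ i 2))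
    (x : Fin 3 → A) (y : Fin 3 → B) :
    permutedAssociatorSum (A ⊗[K] B) c τ (fun j => x j ⊗ₜ[K] y j) =
      permutedAssociatorSum A c τ x ⊗ₜ[K] (y 0 * y 1 * y 2) := by
  simp only [permutedAssociatorSum_apply, associator_tmul, ← hB _ y, TensorProduct.sum_tmul,
    TensorProduct.smul_tmul']

end PureTensors

theorem tensor_g_associative_with_g_shriek_general
    {K : Type*} [CommSemiring K] {ι : Type*} [Fintype ι]
    (c : ι → K) (τ : ι → Equiv.Perm (Fin 3))
    {A : Type*} [NonUnitalNonAssocRing A] [Module K A]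
    [SMulCommClass K A A] [IsScalarTower K A A]
    {B : Type*} [NonUnitalSemiring B] [Module K B]
    [SMulCommClass K B B] [IsScalarTower K B B]
    (hA : ∀ x : Fin 3 → A, ∑ i, c i • associator (x (τ i 0)) (x (τ i 1)) (x (τ i 2)) = 0)
    (hB : ∀ (i : ι) (y : Fin 3 → B), y 0 * y 1 * y 2 = y (τ i 0) * y (τ i 1) * y (τ i 2))
    (u : Fin 3 → A ⊗[K] B) :
    ∑ i, c i • associator (u (τ i 0)) (u (τ i 1)) (u (τ i 2)) = 0 := by
  simp only [← permutedAssociatorSum_apply] at hA ⊢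
  suffices h : permutedAssociatorSum (A ⊗[K] B) c τ = 0 by rw [h, zero_apply]
  refine MultilinearMap.ext_of_span_eq_top (fun _ => span_range_tmul_eq_top K A B) fun p => ?_
  rw [permutedAssociatorSum_tmul c τ hB, hA, TensorProduct.zero_tmul, zero_apply]

/-- If `A` is a `G`-associative algebra and `B` a `G^!`-algebra (an
associative algebra whose triple products are `G`-invariant), then the tensor product
`A ⊗ B`, with multiplication `(a₁⊗b₁)·(a₂⊗b₂) = (a₁·a₂)⊗(b₁·b₂)`, is `G`-associative. -/
theorem tensor_g_associative_with_g_shriek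
    (K : Type*) [Field K] [CharZero K]
    (G : Subgroup (Equiv.Perm (Fin 3))) [DecidablePred (· ∈ G)]
    (A : Type*) [NonUnitalNonAssocRing A] [Module K A]
    [SMulCommClass K A A] [IsScalarTower K A A]
    (B : Type*) [NonUnitalRing B] [Module K B]
    [SMulCommClass K B B] [IsScalarTower K B B]
    (hA : ∀ x : Fin 3 → A,
      ∑ σ : G,
        (Equiv.Perm.sign (σ : Equiv.Perm (Fin 3)) : ℤ) •
          ((x ((σ : Equiv.Perm (Fin 3))⁻¹ 0) * x ((σ : Equiv.Perm (Fin 3))⁻¹ 1))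
              * x ((σ : Equiv.Perm (Fin 3))⁻¹ 2)
            - x ((σ : Equiv.Perm (Fin 3))⁻¹ 0)
              * (x ((σ : Equiv.Perm (Fin 3))⁻¹ 1) * x ((σ : Equiv.Perm (Fin 3))⁻¹ 2))) = 0)
    (hB : ∀ (y : Fin 3 → B) (σ : Equiv.Perm (Fin 3)), σ ∈ G →
      y 0 * y 1 * y 2 = y (σ 0) * y (σ 1) * y (σ 2)) :
    ∀ u : Fin 3 → A ⊗[K] B,
      ∑ σ : G,
        (Equiv.Perm.sign (σ : Equiv.Perm (Fin 3)) : ℤ) •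
          ((u ((σ : Equiv.Perm (Fin 3))⁻¹ 0) * u ((σ : Equiv.Perm (Fin 3))⁻¹ 1))
              * u ((σ : Equiv.Perm (Fin 3))⁻¹ 2)
            - u ((σ : Equiv.Perm (Fin 3))⁻¹ 0)
              * (u ((σ : Equiv.Perm (Fin 3))⁻¹ 1) * u ((σ : Equiv.Perm (Fin 3))⁻¹ 2))) = 0 := by
  simp only [← Int.cast_smul_eq_zsmul K] at hA ⊢
  exact tensor_g_associative_with_g_shriek_general _ (fun σ : G => (σ : Equiv.Perm (Fin 3))⁻¹)
    hA fun σ y => hB y _ (G.inv_mem σ.2)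
end
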